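/- Let K be a field of characteristic 0 and let M be a Malcev dialgebra over K. Define the trilinear operation ⟨a,b,c⟩ = 2(ab)c + a(bc) + (ac)b on M. Then for all a,b,c,d,e ∈ M: ⟨a,⟨b,c,d⟩,e⟩ = ⟨⟨a,b,c⟩,d,e⟩ − ⟨⟨a,c,b⟩,d,e⟩ − ⟨⟨a,d,b⟩,c,e⟩ + ⟨⟨a,d,c⟩,b,e⟩. -/

import Mathlib

/-- The trilinear operation `⟨a,b,c⟩ = 2(ab)c + a(bc) + (ac)b` associated to a
bilinear product `f`. -/
def trip {K M : Type} [Field K] [AddCommGroup M] [Module K M]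
    (f : M →ₗ[K] M →ₗ[K] M) (a b c : M) : M :=
  (2 : K) • f (f a b) c + f a (f b c) + f (f a c) b

section MalcevDialgebra

variable {K M : Type} [Field K] [AddCommGroup M] [Module K M] {f : M →ₗ[K] M →ₗ[K] M}

/-- Inside a right argument the product is anticommutative. -/
theorem apply_apply_swap (hra : ∀ a b c : M, f a (f b c) + f a (f c b) = 0) (a b c : M) :
    f a (f b c) = -f a (f c b) :=
  eq_neg_of_add_eq_zero_left (hra a b c)

/-- Anticommutativity also holds one level deeper inside a right argument. -/
theorem apply_apply_apply_swap (hra : ∀ a b c : M, f a (f b c) + f a (f c b) = 0)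
    (a b c d : M) : f a (f (f b c) d) = -f a (f (f c b) d) := by
  rw [apply_apply_swap hra a (f b c) d, apply_apply_swap hra d b c, map_neg,
    apply_apply_swap hra a d (f c b), neg_neg]

/-- Anticommutativity also holds two levels deeper inside a right argument. -/
theorem apply_apply_apply_apply_swap (hra : ∀ a b c : M, f a (f b c) + f a (f c b) = 0)
    (a b c d e : M) : f a (f (f (f b c) d) e) = -f a (f (f (f c b) d) e) := by
  rw [apply_apply_swap hra a (f (f b c) d) e, apply_apply_apply_swap hra e b c d, map_neg,
    apply_apply_swap hra a e (f (f c b) d), neg_neg]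

/-- The sum of the di-Malcev identity over the shuffles of `d` into the word `b c`. -/
theorem diMalcev_shuffle_sum (hra : ∀ a b c : M, f a (f b c) + f a (f c b) = 0)
    (hdm : ∀ a b c d : M,
      f (f (f a b) c) d - f (f (f a d) b) c - f (f a (f c d)) b
        - f (f a c) (f b d) - f a (f (f b c) d) = 0) (a b c d : M) :
    f (f (f a b) c) d + f (f (f a b) d) c - f (f (f a c) b) d - f (f (f a c) d) b
      + f (f a b) (f c d) - f (f a c) (f b d) - f (f a d) (f b c)
      - f (f a (f b c)) d - f a (f (f b c) d) = 0 := by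
  have h₁ := hdm a b c d
  have h₂ := hdm a b d c
  have h₃ := hdm a d b c
  simp only [apply_apply_swap hra _ d c,
    apply_apply_apply_swap hra _ d b, map_neg, LinearMap.neg_apply] at h₁ h₂ h₃
  linear_combination (norm := module) h₁ + h₂ + h₃

/-- The antisymmetrization of the di-Malcev identity which, multiplied by `e`, accounts for
the terms of the first Leibniz triple system identity ending in `e`. -/
theorem diMalcev_antisymm_sum (hra : ∀ a b c : M, f a (f b c) + f a (f c b) = 0)
    (hdm : ∀ a b c d : M,
      f (f (f a b) c) d - f (f (f a d) b) c - f (f a (f c d)) b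
        - f (f a c) (f b d) - f a (f (f b c) d) = 0) (a b c d : M) :
    (2 : K) • f a (f (f b c) d) + f a (f (f b d) c) - f a (f (f c d) b)
      - (2 : K) • f (f a (f b c)) d - f (f a (f b d)) c + f (f a (f c d)) b
      - f (f (f a b) c) d + f (f (f a b) d) c + f (f (f a c) b) d - f (f (f a c) d) b
      + (2 : K) • f (f (f a d) b) c - (2 : K) • f (f (f a d) c) b = 0 := by
  have h₁ := hdm a b c d
  have h₂ := hdm a c b d
  have h₃ := hdm a d b c
  have h₄ := hdm a d c b
  simp only [apply_apply_swap hra _ d c, apply_apply_swap hra _ d b, apply_apply_swap hra _ c b,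
    apply_apply_apply_swap hra _ d b, apply_apply_apply_swap hra _ d c,
    apply_apply_apply_swap hra _ c b, map_neg, LinearMap.neg_apply] at h₁ h₂ h₃ h₄
  linear_combination (norm := module) -h₁ + h₂ + h₃ - h₄

/-- The degree five consequence of the di-Malcev identity obtained from its shuffle sums
at `(a, f b c, d, e)` and `(f a d, b, c, e)`. -/
theorem diMalcev_shuffle_sum_apply (hra : ∀ a b c : M, f a (f b c) + f a (f c b) = 0)
    (hdm : ∀ a b c d : M,
      f (f (f a b) c) d - f (f (f a d) b) c - f (f a (f c d)) b
        - f (f a c) (f b d) - f a (f (f b c) d) = 0) (a b c d e : M) :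
    f a (f (f (f b c) d) e) + f (f a e) (f (f b c) d) - f (f a (f b c)) (f d e)
      + f (f a (f (f b c) d)) e + f (f (f a d) b) (f c e) - f (f (f a d) c) (f b e)
      - f (f (f a (f b c)) d) e - f (f (f a (f b c)) e) d
      + f (f (f (f a d) b) c) e + f (f (f (f a d) b) e) c
      - f (f (f (f a d) c) b) e - f (f (f (f a d) c) e) b = 0 := by
  have h₁ := diMalcev_shuffle_sum hra hdm (f a d) b c e
  have h₂ := diMalcev_shuffle_sum hra hdm a (f b c) d e
  linear_combination (norm := module) h₁ - h₂

end MalcevDialgebra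

/-- In any Malcev dialgebra `M` over a field `K` of
characteristic 0, the trilinear operation `⟨a,b,c⟩ = 2(ab)c + a(bc) + (ac)b`
satisfies the first Leibniz triple system identity:
`⟨a,⟨b,c,d⟩,e⟩ = ⟨⟨a,b,c⟩,d,e⟩ − ⟨⟨a,c,b⟩,d,e⟩ − ⟨⟨a,d,b⟩,c,e⟩ + ⟨⟨a,d,c⟩,b,e⟩`. -/
theorem trilinear_first_LTS_identity (K : Type) [Field K] [CharZero K]
    (M : Type) [AddCommGroup M] [Module K M]
    (f : M →ₗ[K] M →ₗ[K] M)
    (hra : ∀ a b c : M, f a (f b c) + f a (f c b) = 0)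
    (hdm : ∀ a b c d : M,
      f (f (f a b) c) d - f (f (f a d) b) c - f (f a (f c d)) b
        - f (f a c) (f b d) - f a (f (f b c) d) = 0) :
    ∀ a b c d e : M,
      trip f a (trip f b c d) e
        = trip f (trip f a b c) d e - trip f (trip f a c b) d e
          - trip f (trip f a d b) c e + trip f (trip f a d c) b e := by
  intro a b c d e
  have hP := congrArg (f · e) (diMalcev_antisymm_sum hra hdm a b c d)
  have h₁ := diMalcev_shuffle_sum_apply hra hdm a b c d e
  have h₂ := diMalcev_shuffle_sum_apply hra hdm a b d c e
  have h₃ := diMalcev_shuffle_sum_apply hra hdm a d c b e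
  simp only [trip, map_add, map_sub, map_smul, LinearMap.add_apply, LinearMap.sub_apply,
    LinearMap.smul_apply, map_zero, LinearMap.zero_apply, map_neg, LinearMap.neg_apply,
    apply_apply_swap hra _ d c, apply_apply_swap hra _ c b, apply_apply_swap hra _ b (f c d),
    apply_apply_swap hra _ d b,
    apply_apply_apply_swap hra _ d c, apply_apply_apply_swap hra _ b (f c d),
    apply_apply_apply_apply_swap hra _ d c] at hP h₁ h₂ h₃ ⊢
  linear_combination (norm := module) hP + (2 : K) • h₁ + h₂ + h₃
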